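/- Let p be an odd prime, ε the fundamental unit of ℚ(√(2p)), and k = ℚ(√(2p), i). The following are equivalent: (a) ε is a square in ℚ(√p, √2); (b) the Hasse unit index Q_k = [O_k^× : ⟨i⟩·O_{ℚ(√(2p))}^×] equals 2; (c) ε has norm +1. -/

import Mathlib

/-!
Put `K = ℚ(√(2p))`. Since `ε` is not a square in `K`, each of the three conditions says that `2ε` is
a square in `K`.

* If `(a + b√2)² = ε` with `a, b ∈ K`, then `2ab = 0`, and `a ≠ 0` would make `ε` a square in `K`;
  so `ε = 2b²`.
* If `u` is a unit of `k`, then `ū/u` is an integer of `k` on the unit circle, which forces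
  `ū² = ±u²` because `2p > 4`. The sign `+` describes the subgroup `⟨i⟩·O_K^×`, so the index is `2`
  exactly when some unit has `ū² = -u²`. For such a unit `uū = εⁿ`, hence `(u + ū)² = 2εⁿ` with `n`
  odd, as `2` is not a square in `K`; conversely, if `β² = 2ε`, take `u = (1 + i)β/2`.
* If `ε = m + n√(2p)` has norm `1`, then `(1 + ε)² = (2m + 2)ε`, while
  `(2m + 2)(2m - 2) = 2p(2n)²` shows that `2m + 2` is a divisor of `2p` up to squares. This divisor
  is positive because `ε > 0`, and `1` and `2p` are excluded because `ε` is not a square; the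
  remaining `2` and `p` agree modulo squares of `K`. Conversely `4N(ε) = N(2ε)` is a square of `ℚ`.
-/

/- STATEMENT 6: Let p be an odd prime, ε the fundamental unit of ℚ(√(2p)),
k = ℚ(√(2p), i). TFAE: (a) ε is a square in ℚ(√p, √2); (b) the Hasse unit index
Q_k = [O_k^× : ⟨i⟩·O_{ℚ(√(2p))}^×] equals 2; (c) N(ε) = +1. -/

open Complex NumberField IntermediateField nonZeroDivisors

noncomputable section

/-- ℚ(√(2p)) as a subfield of ℂ. -/
def Q2p (p : ℕ) : IntermediateField ℚ ℂ := ℚ⟮(Real.sqrt (2 * p) : ℂ)⟯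

/-- k = ℚ(√(2p), i) as a subfield of ℂ. -/
def kfield (p : ℕ) : IntermediateField ℚ ℂ := ℚ⟮(Real.sqrt (2 * p) : ℂ), (Complex.I : ℂ)⟯

/-- ℚ(√p, √2) as a subfield of ℂ. -/
def Fbiq (p : ℕ) : IntermediateField ℚ ℂ := ℚ⟮(Real.sqrt p : ℂ), (Real.sqrt 2 : ℂ)⟯

/-- `ε` is the fundamental unit of a real quadratic field `Q` (a subfield of ℂ):
it is a real number > 1 and generates the unit group modulo ±1. -/
def IsFundamentalUnit {Q : IntermediateField ℚ ℂ} (ε : (𝓞 Q)ˣ) : Prop :=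
  (∃ r : ℝ, 1 < r ∧ (((ε : 𝓞 Q) : Q) : ℂ) = (r : ℂ)) ∧
  ∀ u : (𝓞 Q)ˣ, ∃ n : ℤ, u = ε ^ n ∨ u = -ε ^ n

/-- The subgroup ⟨i⟩·O_{ℚ(√(2p))}^× of O_k^×: the subgroup generated by the unit i
together with the units coming from ℚ(√(2p)). -/
def WE (p : ℕ) : Subgroup (𝓞 (kfield p))ˣ :=
  Subgroup.closure {u : (𝓞 (kfield p))ˣ |
    (((u : 𝓞 (kfield p)) : kfield p) : ℂ) = Complex.I ∨
    ∃ v : (𝓞 (Q2p p))ˣ, (((u : 𝓞 (kfield p)) : kfield p) : ℂ) =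
      (((v : 𝓞 (Q2p p)) : Q2p p) : ℂ)}

section QuadraticExtension

variable {F L : Type*} [Field F] [Field L] [Algebra F L] {c : F} {y : L}

/-- The evaluation `a + b√c ↦ a + by` of the formal quadratic algebra `F[√c]` at a square root `y`
of `c`. Through it, elements of the subfield `F⟮y⟯` get coordinates, a conjugate and a norm. -/
def evalSqrt (hy : y ^ 2 = algebraMap F L c) : QuadraticAlgebra F c 0 →ₐ[F] L :=
  QuadraticAlgebra.lift ⟨y, by rw [← sq, hy, Algebra.algebraMap_eq_smul_one, zero_smul, add_zero]⟩

lemma evalSqrt_apply (hy : y ^ 2 = algebraMap F L c) (z : QuadraticAlgebra F c 0) :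
    evalSqrt hy z = algebraMap F L z.re + algebraMap F L z.im * y := by
  simp [evalSqrt, Algebra.smul_def]

lemma evalSqrt_injective (hc : ¬ IsSquare c) (hy : y ^ 2 = algebraMap F L c) :
    Function.Injective (evalSqrt hy) := by
  have : Fact (∀ r : F, r ^ 2 ≠ c + 0 * r) :=
    ⟨fun r hr ↦ hc ⟨r, by rw [← sq, hr, zero_mul, add_zero]⟩⟩
  exact (evalSqrt hy : QuadraticAlgebra F c 0 →+* L).injective

lemma isIntegral_sqrt (hy : y ^ 2 = algebraMap F L c) : IsIntegral F y :=
  .of_pow two_pos (hy ▸ isIntegral_algebraMap)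

lemma range_evalSqrt (hy : y ^ 2 = algebraMap F L c) :
    (evalSqrt hy).range = F⟮y⟯.toSubalgebra := by
  rw [adjoin_simple_toSubalgebra_of_isAlgebraic (isIntegral_sqrt hy).isAlgebraic]
  refine le_antisymm ?_ (Algebra.adjoin_le ?_)
  · rintro _ ⟨z, rfl⟩
    change evalSqrt hy z ∈ _
    rw [evalSqrt_apply]
    exact add_mem (algebraMap_mem _ _) <|
      mul_mem (algebraMap_mem _ _) (Algebra.self_mem_adjoin_singleton F y)
  · rintro _ rfl
    exact ⟨⟨0, 1⟩, by simp [evalSqrt_apply]⟩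

lemma mem_adjoin_sqrt_iff (hy : y ^ 2 = algebraMap F L c) {x : L} :
    x ∈ F⟮y⟯ ↔ ∃ a b : F, x = algebraMap F L a + algebraMap F L b * y := by
  rw [← IntermediateField.mem_toSubalgebra, ← range_evalSqrt hy]
  exact ⟨fun ⟨z, hz⟩ ↦ ⟨z.re, z.im, hz.symm.trans (evalSqrt_apply hy z)⟩,
    fun ⟨a, b, h⟩ ↦ ⟨⟨a, b⟩, (evalSqrt_apply hy _).trans h.symm⟩⟩

/-- The subfield `F⟮y⟯` generated by a square root `y` of a nonsquare `c`, presented as the formal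
quadratic algebra `F[√c]`. -/
def evalSqrtEquiv (hc : ¬ IsSquare c) (hy : y ^ 2 = algebraMap F L c) :
    QuadraticAlgebra F c 0 ≃ₐ[F] F⟮y⟯ :=
  (AlgEquiv.ofInjective _ (evalSqrt_injective hc hy)).trans
    (Subalgebra.equivOfEq _ _ (range_evalSqrt hy))

lemma coe_evalSqrtEquiv (hc : ¬ IsSquare c) (hy : y ^ 2 = algebraMap F L c)
    (z : QuadraticAlgebra F c 0) : (evalSqrtEquiv hc hy z : L) = evalSqrt hy z :=
  rfl

lemma norm_adjoin_sqrt (hc : ¬ IsSquare c) (hy : y ^ 2 = algebraMap F L c) {x : F⟮y⟯} {a b : F}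
    (hx : (x : L) = algebraMap F L a + algebraMap F L b * y) :
    Algebra.norm F x = a ^ 2 - c * b ^ 2 := by
  have hx' : x = evalSqrtEquiv hc hy ⟨a, b⟩ :=
    Subtype.ext (by rw [hx, coe_evalSqrtEquiv, evalSqrt_apply])
  calc Algebra.norm F x
      = LinearMap.det (Algebra.lmul F _ (⟨a, b⟩ : QuadraticAlgebra F c 0)) := by
        rw [hx', Algebra.norm_eq_of_algEquiv, Algebra.norm_apply]
    _ = QuadraticAlgebra.norm (⟨a, b⟩ : QuadraticAlgebra F c 0) :=
        QuadraticAlgebra.det_toLinearMap_eq_norm _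
    _ = a ^ 2 - c * b ^ 2 := by rw [QuadraticAlgebra.norm_def]; ring

lemma exists_mem_adjoin_sqrt_sq_eq_iff [NeZero (2 : F)] (hc : ¬ IsSquare c)
    (hy : y ^ 2 = algebraMap F L c) {e : F} :
    (∃ x ∈ F⟮y⟯, x ^ 2 = algebraMap F L e) ↔ IsSquare e ∨ IsSquare (c * e) := by
  constructor
  · rintro ⟨x, hx, hxe⟩
    obtain ⟨z, rfl⟩ : x ∈ (evalSqrt hy).range := range_evalSqrt hy ▸ hx
    have hz : z ^ 2 = algebraMap F _ e :=
      evalSqrt_injective hc hy (by rw [map_pow, AlgHom.commutes]; exact hxe)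
    have hre : z.re * z.re + c * z.im * z.im = e := by
      simpa [sq] using congrArg QuadraticAlgebra.re hz
    have him : 2 * (z.re * z.im) = 0 := by
      rw [two_mul]
      simpa [sq, mul_comm z.im] using congrArg QuadraticAlgebra.im hz
    rcases mul_eq_zero.1 ((mul_eq_zero.1 him).resolve_left two_ne_zero) with h | h
    · exact .inr ⟨c * z.im, by rw [← hre, h]; ring⟩
    · exact .inl ⟨z.re, by rw [← hre, h]; ring⟩
  · rintro (⟨r, rfl⟩ | ⟨r, hr⟩)
    · exact ⟨algebraMap F L r, IntermediateField.algebraMap_mem _ r, by rw [map_mul, sq]⟩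
    · have hc0 : c ≠ 0 := fun h ↦ hc (h ▸ IsSquare.zero)
      have he : (r / c) ^ 2 * c = e := by field_simp; linear_combination -hr
      refine ⟨algebraMap F L (r / c) * y,
        mul_mem (IntermediateField.algebraMap_mem _ _) (mem_adjoin_simple_self F y), ?_⟩
      rw [mul_pow, hy, ← map_pow, ← map_mul, he]

end QuadraticExtension

section RationalIntegers

lemma exists_int_eq_of_squarefree_mul_sq {d m : ℤ} (hd : Squarefree d) {x : ℚ}
    (h : d * x ^ 2 = m) : ∃ n : ℤ, x = n := by
  have hnum : d * x.num ^ 2 = m * (x.den : ℤ) ^ 2 := by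
    have : (d : ℚ) * x.num ^ 2 = m * (x.den : ℚ) ^ 2 := by
      rw [← h, ← Rat.mul_den_eq_num x]; ring
    exact_mod_cast this
  have hcop : IsCoprime ((x.den : ℤ) ^ 2) (x.num ^ 2) :=
    (Int.isCoprime_iff_nat_coprime.2 x.reduced).symm.pow
  have hdvd : (x.den : ℤ) * x.den ∣ d :=
    sq (x.den : ℤ) ▸ hcop.dvd_of_dvd_mul_right (hnum ▸ dvd_mul_left _ _)
  have hden : x.den = 1 := by simpa using Int.isUnit_iff_natAbs_eq.1 (hd _ hdvd)
  exact ⟨x.num, ((Rat.den_eq_one_iff x).1 hden).symm⟩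

lemma even_and_even_of_four_dvd_sq_sub_mul_sq {d t n : ℤ} (hd : Squarefree d) (hd1 : d % 4 ≠ 1)
    (h : 4 ∣ t ^ 2 - d * n ^ 2) : Even t ∧ Even n := by
  have hd0 : d % 4 ≠ 0 := fun h0 ↦
    Int.prime_two.not_isUnit (hd 2 (Int.dvd_of_emod_eq_zero h0))
  have hd23 : d % 4 = 2 ∨ d % 4 = 3 := by lia
  have hmod : (t ^ 2 - d * n ^ 2) % 4 = 0 := Int.emod_eq_zero_of_dvd h
  have ht : t % 4 = 0 ∨ t % 4 = 1 ∨ t % 4 = 2 ∨ t % 4 = 3 := by lia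
  have hn : n % 4 = 0 ∨ n % 4 = 1 ∨ n % 4 = 2 ∨ n % 4 = 3 := by lia
  rw [Int.even_iff, Int.even_iff]
  rcases hd23 with hd | hd <;> rcases ht with ht | ht | ht | ht <;>
    rcases hn with hn | hn | hn | hn <;>
    first
    | lia
    | simp [sq, Int.sub_emod, Int.mul_emod, hd, ht, hn] at hmod

lemma exists_eq_squarefree_mul_sq {a : ℤ} (ha : a ≠ 0) :
    ∃ e y : ℤ, Squarefree e ∧ a = e * y ^ 2 := by
  obtain ⟨e, y, hey, he⟩ := Nat.sq_mul_squarefree a.natAbs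
  refine ⟨a.sign * e, y, ?_, ?_⟩
  · rw [← Int.squarefree_natAbs, Int.natAbs_mul, Int.natAbs_sign_of_ne_zero ha]
    simpa using he
  · conv_lhs => rw [← Int.sign_mul_natAbs a, ← hey]
    push_cast; ring

lemma exists_dvd_eq_mul_sq {a b c d : ℤ} {k : ℕ} (h : a * b = d * c ^ 2)
    (hgcd : (Int.gcd a b : ℤ) ∣ d ^ k) : ∃ e y : ℤ, e ∣ d ∧ a = e * y ^ 2 := by
  rcases eq_or_ne a 0 with rfl | ha
  · exact ⟨1, 0, one_dvd d, by ring⟩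
  obtain ⟨e, y, he, hey⟩ := exists_eq_squarefree_mul_sq ha
  have hy : y ≠ 0 := by rintro rfl; exact ha (by rw [hey]; ring)
  obtain ⟨t, ht⟩ : y ∣ d * c := by
    rw [← Int.pow_dvd_pow_iff two_ne_zero]
    exact ⟨e * b * d, by linear_combination (-d) * h + b * d * hey⟩
  have het : t ^ 2 = e * (b * d) :=
    mul_left_cancel₀ (pow_ne_zero 2 hy) (by
      linear_combination b * d * hey - d * h - (d * c + y * t) * ht)
  have hebd : e ∣ b * d := by
    have het' : e ∣ t := (he.dvd_pow_iff_dvd two_ne_zero).1 ⟨_, het⟩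
    exact he.dvd_of_squarefree_of_mul_dvd_mul_right (het ▸ sq t ▸ mul_dvd_mul het' het')
  have hed : e ∣ d ^ (k + 1) := calc
    e ∣ Int.gcd e b * d := Int.dvd_gcd_mul_iff_dvd_mul.2 hebd
    _ ∣ Int.gcd a b * d := mul_dvd_mul_right
        (Int.natCast_dvd_natCast.2 (Int.gcd_dvd_gcd_of_dvd_left b ⟨_, hey⟩)) d
    _ ∣ d ^ (k + 1) := pow_succ d k ▸ mul_dvd_mul_right hgcd d
  exact ⟨e, y, (he.dvd_pow_iff_dvd k.succ_ne_zero).1 hed, hey⟩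

lemma exists_dvd_two_mul_add_two_eq_mul_sq {d m n : ℤ} (hd : Even d)
    (h : m ^ 2 - d * n ^ 2 = 1) : ∃ e y : ℤ, e ∣ d ∧ 2 * m + 2 = e * y ^ 2 := by
  refine exists_dvd_eq_mul_sq (b := 2 * m - 2) (c := 2 * n) (k := 2)
    (by linear_combination 4 * h) ?_
  calc (Int.gcd (2 * m + 2) (2 * m - 2) : ℤ)
      ∣ (2 * m + 2) - (2 * m - 2) := dvd_sub (Int.gcd_dvd_left _ _) (Int.gcd_dvd_right _ _)
    _ = 2 ^ 2 := by ring
    _ ∣ d ^ 2 := pow_dvd_pow_of_dvd hd.two_dvd 2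

end RationalIntegers

section QuadraticIntegers

variable {d : ℤ}

lemma not_isSquare_intCast_of_squarefree (hd : Squarefree d) (hd1 : d ≠ 1) :
    ¬ IsSquare (d : ℚ) := by
  rw [Rat.isSquare_intCast_iff]
  rintro ⟨r, rfl⟩
  exact hd1 (Int.isUnit_mul_self (hd r dvd_rfl))

lemma exists_int_of_isIntegral_algebraMap {A : Type*} [Ring A] [Nontrivial A] [Algebra ℚ A] {q : ℚ}
    (h : IsIntegral ℤ (algebraMap ℚ A q)) : ∃ m : ℤ, q = m := by
  obtain ⟨m, hm⟩ := IsIntegrallyClosed.isIntegral_iff.1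
    ((isIntegral_algebraMap_iff (algebraMap ℚ A).injective).1 h)
  exact ⟨m, hm.symm⟩

lemma exists_int_eq_of_isIntegral (hd : Squarefree d) (hd1 : d % 4 ≠ 1)
    {z : QuadraticAlgebra ℚ (d : ℚ) 0} (hz : IsIntegral ℤ z) :
    ∃ m n : ℤ, z = ⟨m, n⟩ := by
  have hzs : IsIntegral ℤ (star z) := hz.map (starRingEnd _).toIntAlgHom
  obtain ⟨t, ht⟩ := exists_int_of_isIntegral_algebraMap
    (QuadraticAlgebra.algebraMap_trace_eq_add_star (z := z) ▸ hz.add hzs)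
  obtain ⟨N, hN⟩ := exists_int_of_isIntegral_algebraMap
    (QuadraticAlgebra.algebraMap_norm_eq_mul_star z ▸ hz.mul hzs)
  rw [QuadraticAlgebra.trace_def, zero_mul, add_zero] at ht
  rw [QuadraticAlgebra.norm_def, zero_mul, zero_mul, add_zero] at hN
  have hdisc : d * (2 * z.im) ^ 2 = (t ^ 2 - 4 * N : ℤ) := by
    push_cast; rw [← ht, ← hN]; ring
  obtain ⟨n, hn⟩ := exists_int_eq_of_squarefree_mul_sq hd hdisc
  have h4 : 4 ∣ t ^ 2 - d * n ^ 2 := ⟨N, by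
    rw [hn] at hdisc
    have : d * n ^ 2 = t ^ 2 - 4 * N := by exact_mod_cast hdisc
    rw [this]; ring⟩
  obtain ⟨⟨t', rfl⟩, ⟨n', rfl⟩⟩ := even_and_even_of_four_dvd_sq_sub_mul_sq hd hd1 h4
  push_cast at ht hn
  exact ⟨t', n', QuadraticAlgebra.ext (by dsimp only; linarith) (by dsimp only; linarith)⟩

variable {L : Type*} [Field L] [CharZero L] {s : L}

lemma exists_int_evalSqrt_eq (hd : Squarefree d) (hd1 : d % 4 ≠ 1)
    (hs : s ^ 2 = algebraMap ℚ L d) {x : L} (hx : x ∈ ℚ⟮s⟯) (hxi : IsIntegral ℤ x) :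
    ∃ m n : ℤ, evalSqrt hs ⟨m, n⟩ = x := by
  obtain ⟨z, rfl⟩ : x ∈ (evalSqrt hs).range := range_evalSqrt hs ▸ hx
  have hinj := evalSqrt_injective
    (not_isSquare_intCast_of_squarefree hd (ne_of_apply_ne (· % 4) hd1)) hs
  obtain ⟨m, n, rfl⟩ := exists_int_eq_of_isIntegral hd hd1
    ((isIntegral_algHom_iff ((evalSqrt hs).restrictScalars ℤ) hinj).1 hxi)
  exact ⟨m, n, rfl⟩

/-- The rational part `A² + dB² + C² + dD² = n` of `(A + Bs)² + (C + Ds)² = n` leaves no room for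
`B` and `D`. -/
lemma exists_int_of_sq_add_sq_eq (hd : Squarefree d) (hd1 : d % 4 ≠ 1)
    (hs : s ^ 2 = algebraMap ℚ L d) {x y : L} (hx : x ∈ ℚ⟮s⟯) (hy : y ∈ ℚ⟮s⟯)
    (hxi : IsIntegral ℤ x) (hyi : IsIntegral ℤ y) {n : ℤ} (hnd : n < d) (hd0 : 0 < d)
    (h : x ^ 2 + y ^ 2 = n) : ∃ a b : ℤ, x = a ∧ y = b := by
  obtain ⟨A, B, rfl⟩ := exists_int_evalSqrt_eq hd hd1 hs hx hxi
  obtain ⟨C, D, rfl⟩ := exists_int_evalSqrt_eq hd hd1 hs hy hyi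
  have hinj := evalSqrt_injective
    (not_isSquare_intCast_of_squarefree hd (ne_of_apply_ne (· % 4) hd1)) hs
  have hsum : (⟨A, B⟩ ^ 2 + ⟨C, D⟩ ^ 2 : QuadraticAlgebra ℚ (d : ℚ) 0) = algebraMap ℚ _ n :=
    hinj (by rw [map_add, map_pow, map_pow, AlgHom.commutes, h, map_intCast])
  have hre : A ^ 2 + d * B ^ 2 + (C ^ 2 + d * D ^ 2) = n := by
    have : (A ^ 2 + d * B ^ 2 + (C ^ 2 + d * D ^ 2) : ℚ) = n := by
      simpa [sq, mul_assoc] using congrArg QuadraticAlgebra.re hsum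
    exact_mod_cast this
  have hB : B = 0 := by
    by_contra hB
    have : 0 < B ^ 2 := by positivity
    nlinarith [sq_nonneg A, sq_nonneg C, sq_nonneg D]
  have hD : D = 0 := by
    by_contra hD
    have : 0 < D ^ 2 := by positivity
    nlinarith [sq_nonneg A, sq_nonneg C, sq_nonneg B]
  exact ⟨A, C, by simp [evalSqrt_apply, hB], by simp [evalSqrt_apply, hD]⟩

lemma exists_dvd_isSquare_mul_of_norm_eq_one (hd : Squarefree d) (hd2 : Even d)
    (hs : s ^ 2 = algebraMap ℚ L d) {x : ℚ⟮s⟯} (hxi : IsIntegral ℤ x)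
    (hnorm : Algebra.norm ℚ x = 1) : ∃ e : ℤ, e ∣ d ∧ IsSquare (e * x) := by
  have hd1 : d % 4 ≠ 1 := by have := Int.even_iff.1 hd2; lia
  have hsq := not_isSquare_intCast_of_squarefree hd (ne_of_apply_ne (· % 4) hd1)
  obtain ⟨m, n, hmn⟩ := exists_int_evalSqrt_eq hd hd1 hs x.2
    (hxi.map (algebraMap ℚ⟮s⟯ L).toIntAlgHom)
  rw [evalSqrt_apply, map_intCast, map_intCast] at hmn
  have hpell : m ^ 2 - d * n ^ 2 = 1 := by
    have := norm_adjoin_sqrt (a := m) (b := n) hsq hs (by rw [← hmn, map_intCast, map_intCast])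
    exact_mod_cast this.symm.trans hnorm
  have hquad : x ^ 2 = 2 * m * x - 1 := by
    have hpell' : (m ^ 2 - d * n ^ 2 : L) = 1 := by exact_mod_cast hpell
    rw [map_intCast] at hs
    refine Subtype.ext (show (x : L) ^ 2 = 2 * m * x - 1 from ?_)
    rw [← hmn]
    linear_combination n ^ 2 * hs - hpell'
  obtain ⟨e, y, hed, hey⟩ := exists_dvd_two_mul_add_two_eq_mul_sq hd2 hpell
  have hsquare : (1 + x) ^ 2 = e * y ^ 2 * x := by
    have hey' : (2 * m + 2 : ℚ⟮s⟯) = e * y ^ 2 := by exact_mod_cast hey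
    linear_combination hquad + x * hey'
  rcases eq_or_ne y 0 with rfl | hy
  · have hx : x = -1 := by
      rw [Int.cast_zero, zero_pow two_ne_zero, mul_zero, zero_mul, sq_eq_zero_iff] at hsquare
      exact eq_neg_of_add_eq_zero_right hsquare
    exact ⟨-1, by simp, 1, by simp [hx]⟩
  · have hy' : (y : ℚ⟮s⟯) ≠ 0 := Int.cast_ne_zero.2 hy
    exact ⟨e, hed, (1 + x) / y, by field_simp; linear_combination -hsquare⟩

end QuadraticIntegers

section ComplexSubfields

open scoped ComplexConjugate

lemma exists_ofReal_eq_of_mem_adjoin {r : ℝ} {x : ℂ} (hx : x ∈ ℚ⟮(r : ℂ)⟯) :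
    ∃ t : ℝ, (t : ℂ) = x :=
  (adjoin_simple_le_iff.2 ⟨r, rfl⟩ :
    ℚ⟮(r : ℂ)⟯ ≤ (Complex.ofRealAm.restrictScalars ℚ).fieldRange) hx

lemma conj_eq_of_mem_adjoin {r : ℝ} {x : ℂ} (hx : x ∈ ℚ⟮(r : ℂ)⟯) : conj x = x := by
  obtain ⟨t, rfl⟩ := exists_ofReal_eq_of_mem_adjoin hx
  exact Complex.conj_ofReal t

lemma mem_adjoin_pair_I_iff {s x : ℂ} :
    x ∈ ℚ⟮s, I⟯ ↔ ∃ a ∈ ℚ⟮s⟯, ∃ b ∈ ℚ⟮s⟯, x = a + b * I := by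
  have hI : I ^ 2 = algebraMap ℚ⟮s⟯ ℂ (-1) := by rw [map_neg, map_one, I_sq]
  rw [← adjoin_simple_adjoin_simple, IntermediateField.mem_restrictScalars, mem_adjoin_sqrt_iff hI]
  exact ⟨fun ⟨a, b, h⟩ ↦ ⟨a, a.2, b, b.2, h⟩, fun ⟨a, ha, b, hb, h⟩ ↦ ⟨⟨a, ha⟩, ⟨b, hb⟩, h⟩⟩

lemma conj_add_mul_I {a b : ℂ} (ha : conj a = a) (hb : conj b = b) :
    conj (a + b * I) = a - b * I := by
  rw [map_add, map_mul, ha, hb, conj_I]; ring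

lemma conj_mem_adjoin_pair_I {r : ℝ} {x : ℂ} (hx : x ∈ ℚ⟮(r : ℂ), I⟯) :
    conj x ∈ ℚ⟮(r : ℂ), I⟯ := by
  obtain ⟨a, ha, b, hb, rfl⟩ := mem_adjoin_pair_I_iff.1 hx
  rw [conj_add_mul_I (conj_eq_of_mem_adjoin ha) (conj_eq_of_mem_adjoin hb)]
  exact mem_adjoin_pair_I_iff.2 ⟨a, ha, -b, neg_mem hb, by ring⟩

lemma mem_adjoin_of_conj_eq {r : ℝ} {x : ℂ} (hx : x ∈ ℚ⟮(r : ℂ), I⟯) (hconj : conj x = x) :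
    x ∈ ℚ⟮(r : ℂ)⟯ := by
  obtain ⟨a, ha, b, hb, rfl⟩ := mem_adjoin_pair_I_iff.1 hx
  rw [conj_add_mul_I (conj_eq_of_mem_adjoin ha) (conj_eq_of_mem_adjoin hb)] at hconj
  rwa [show a + b * I = a by linear_combination -hconj / 2]

lemma isIntegral_conj {x : ℂ} (hx : IsIntegral ℤ x) : IsIntegral ℤ (conj x) :=
  hx.map (starRingEnd ℂ).toIntAlgHom

lemma mul_eq_zero_of_sq_add_sq_eq_four {a b : ℤ} (h : a ^ 2 + b ^ 2 = 4) : a * b = 0 := by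
  obtain ⟨ha, ha'⟩ : -2 ≤ a ∧ a ≤ 2 := ⟨by nlinarith, by nlinarith⟩
  obtain ⟨hb, hb'⟩ : -2 ≤ b ∧ b ≤ 2 := ⟨by nlinarith, by nlinarith⟩
  interval_cases a <;> interval_cases b <;> simp_all

lemma sq_eq_one_or_neg_one_of_mul_conj_eq_one {d : ℤ} (hd : Squarefree d) (hd1 : d % 4 ≠ 1)
    (hd4 : 4 < d) {s : ℝ} (hs : (s : ℂ) ^ 2 = algebraMap ℚ ℂ d) {z : ℂ}
    (hz : z ∈ ℚ⟮(s : ℂ), I⟯) (hzi : IsIntegral ℤ z) (hnorm : z * conj z = 1) :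
    z ^ 2 = 1 ∨ z ^ 2 = -1 := by
  obtain ⟨a, ha, b, hb, rfl⟩ := mem_adjoin_pair_I_iff.1 hz
  have hzbar := isIntegral_conj hzi
  rw [conj_add_mul_I (conj_eq_of_mem_adjoin ha) (conj_eq_of_mem_adjoin hb)] at hnorm hzbar
  have hai : IsIntegral ℤ (2 * a) :=
    (by ring : a + b * I + (a - b * I) = 2 * a) ▸ hzi.add hzbar
  have hbi : IsIntegral ℤ (2 * b) :=
    (by linear_combination (-2 * b) * I_sq : I * (a - b * I - (a + b * I)) = 2 * b) ▸
      Complex.isIntegral_int_I.mul (hzbar.sub hzi)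
  have hsum : (2 * a) ^ 2 + (2 * b) ^ 2 = 4 := by
    linear_combination 4 * hnorm + 4 * b ^ 2 * I_sq
  obtain ⟨A, B, hA, hB⟩ := exists_int_of_sq_add_sq_eq hd hd1 hs
    (mul_mem (ofNat_mem _ 2) ha) (mul_mem (ofNat_mem _ 2) hb) hai hbi hd4 (by lia)
    (by simpa using hsum)
  have hAB : A * B = 0 := mul_eq_zero_of_sq_add_sq_eq_four <| by
    rw [hA, hB] at hsum; exact_mod_cast hsum
  rcases mul_eq_zero.1 hAB with rfl | rfl
  · obtain rfl : a = 0 := by simpa using hA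
    right
    linear_combination b ^ 2 * I_sq - hsum / 4
  · obtain rfl : b = 0 := by simpa using hB
    left
    linear_combination hsum / 4

end ComplexSubfields

section Units

variable {K : IntermediateField ℚ ℂ}

/-- The complex number underlying a unit of the ring of integers of a subfield `K` of `ℂ`, as a
homomorphism. Units of different subfields are compared through it. -/
def unitVal (K : IntermediateField ℚ ℂ) : (𝓞 K)ˣ →* ℂ :=
  ((algebraMap K ℂ).comp (algebraMap (𝓞 K) K) : 𝓞 K →* ℂ).comp (Units.coeHom (𝓞 K))

lemma unitVal_apply (u : (𝓞 K)ˣ) : unitVal K u = (((u : 𝓞 K) : K) : ℂ) := rfl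

lemma unitVal_mem (u : (𝓞 K)ˣ) : unitVal K u ∈ K := ((u : 𝓞 K) : K).2

lemma unitVal_neg (u : (𝓞 K)ˣ) : unitVal K (-u) = -unitVal K u := rfl

lemma unitVal_injective : Function.Injective (unitVal K) := fun _ _ h ↦
  Units.ext (RingOfIntegers.ext (Subtype.ext h))

lemma unitVal_ne_zero (u : (𝓞 K)ˣ) : unitVal K u ≠ 0 :=
  (u.isUnit.map ((algebraMap K ℂ).comp (algebraMap (𝓞 K) K))).ne_zero

lemma unitVal_inv (u : (𝓞 K)ˣ) : unitVal K u⁻¹ = (unitVal K u)⁻¹ :=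
  eq_inv_of_mul_eq_one_left (by rw [← map_mul, inv_mul_cancel, map_one])

lemma unitVal_zpow (u : (𝓞 K)ˣ) (n : ℤ) : unitVal K (u ^ n) = unitVal K u ^ n :=
  map_zpow' (unitVal K) unitVal_inv u n

lemma isIntegral_unitVal (u : (𝓞 K)ˣ) : IsIntegral ℤ (unitVal K u) :=
  (RingOfIntegers.isIntegral_coe (u : 𝓞 K)).map (algebraMap K ℂ).toIntAlgHom

lemma exists_unitVal_eq {w : ℂ} (hw : w ∈ K) (h0 : w ≠ 0) (hi : IsIntegral ℤ w)
    (hi' : IsIntegral ℤ w⁻¹) : ∃ u : (𝓞 K)ˣ, unitVal K u = w := by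
  have lift_integral {x : ℂ} (hx : x ∈ K) (hxi : IsIntegral ℤ x) : IsIntegral ℤ (⟨x, hx⟩ : K) :=
    (isIntegral_algHom_iff (algebraMap K ℂ).toIntAlgHom (algebraMap K ℂ).injective).1 hxi
  refine ⟨⟨⟨⟨w, hw⟩, lift_integral hw hi⟩, ⟨⟨w⁻¹, inv_mem hw⟩, lift_integral _ hi'⟩, ?_, ?_⟩, rfl⟩
  · exact RingOfIntegers.ext (Subtype.ext (mul_inv_cancel₀ h0))
  · exact RingOfIntegers.ext (Subtype.ext (inv_mul_cancel₀ h0))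

lemma exists_unitVal_eq_of_pow_eq {F : IntermediateField ℚ ℂ} {w : ℂ} (hw : w ∈ K) {n : ℕ}
    (hn : n ≠ 0) {v : (𝓞 F)ˣ} (h : w ^ n = unitVal F v) : ∃ u : (𝓞 K)ˣ, unitVal K u = w := by
  have h0 : w ≠ 0 := by
    rintro rfl
    exact unitVal_ne_zero v (by rw [← h, zero_pow hn])
  have hinv : w⁻¹ ^ n = unitVal F v⁻¹ := by rw [inv_pow, h, unitVal_inv]
  exact exists_unitVal_eq hw h0
    (.of_pow hn.bot_lt (h ▸ isIntegral_unitVal v)) (.of_pow hn.bot_lt (hinv ▸ isIntegral_unitVal _))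

end Units

namespace IsFundamentalUnit

variable {K : IntermediateField ℚ ℂ} {ε : (𝓞 K)ˣ}

lemma exists_eq_zpow_of_pos (hε : IsFundamentalUnit ε) {u : (𝓞 K)ˣ} {t : ℝ} (ht : 0 < t)
    (hu : unitVal K u = t) : ∃ n : ℤ, u = ε ^ n := by
  obtain ⟨⟨r, hr, hεr⟩, hgen⟩ := hε
  obtain ⟨n, rfl | rfl⟩ := hgen u
  · exact ⟨n, rfl⟩
  · have htr : t = -r ^ n := by
      rw [unitVal_neg, unitVal_zpow, unitVal_apply, hεr] at hu
      exact_mod_cast hu.symm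
    linarith [zpow_pos (one_pos.trans hr) n]

lemma zpow_injective (hε : IsFundamentalUnit ε) : Function.Injective (ε ^ · : ℤ → (𝓞 K)ˣ) := by
  obtain ⟨⟨r, hr, hεr⟩, -⟩ := hε
  intro m n hmn
  have hmn' : (r : ℂ) ^ m = (r : ℂ) ^ n := by
    rw [← hεr, ← unitVal_apply, ← unitVal_zpow, ← unitVal_zpow]
    exact congrArg _ hmn
  exact zpow_right_injective₀ (one_pos.trans hr) hr.ne' (by exact_mod_cast hmn')

lemma not_isSquare (hε : IsFundamentalUnit ε) : ¬ IsSquare ((ε : 𝓞 K) : K) := by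
  rintro ⟨w, hw⟩
  have hw2 : (w : ℂ) ^ 2 = unitVal K ε := by
    rw [sq, unitVal_apply, hw]; rfl
  obtain ⟨u, hu⟩ := exists_unitVal_eq_of_pow_eq w.2 two_ne_zero hw2
  have huε : u ^ 2 = ε := unitVal_injective (by rw [map_pow, hu, hw2])
  obtain ⟨n, hn⟩ : ∃ n : ℤ, u ^ 2 = (ε ^ n) ^ 2 := by
    obtain ⟨n, rfl | rfl⟩ := hε.2 u
    exacts [⟨n, rfl⟩, ⟨n, neg_sq _⟩]
  have hparity : 1 = n * 2 := hε.zpow_injective <| by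
    change ε ^ (1 : ℤ) = ε ^ (n * 2)
    rw [zpow_one, zpow_mul, zpow_ofNat, ← hn, huε]
  lia

end IsFundamentalUnit

section Index

open scoped ComplexConjugate

variable {p : ℕ}

lemma exists_unitVal_eq_I (p : ℕ) : ∃ u : (𝓞 (kfield p))ˣ, unitVal _ u = I :=
  exists_unitVal_eq_of_pow_eq (F := kfield p) (subset_adjoin _ _ (by simp)) four_ne_zero
    (v := 1) (by rw [I_pow_four, map_one])

lemma conj_unitVal_Q2p (v : (𝓞 (Q2p p))ˣ) : conj (unitVal _ v) = unitVal _ v :=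
  conj_eq_of_mem_adjoin (unitVal_mem v)

lemma mem_WE_of_conj_eq {u : (𝓞 (kfield p))ˣ} (hu : conj (unitVal _ u) = unitVal _ u) :
    u ∈ WE p := by
  obtain ⟨v, hv⟩ := exists_unitVal_eq_of_pow_eq (K := Q2p p) (n := 1)
    (mem_adjoin_of_conj_eq (unitVal_mem u) hu) one_ne_zero (pow_one _)
  exact Subgroup.subset_closure (.inr ⟨v, hv.symm⟩)

lemma mem_WE_iff {u : (𝓞 (kfield p))ˣ} :
    u ∈ WE p ↔ conj (unitVal _ u) ^ 2 = unitVal _ u ^ 2 := by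
  constructor
  · let φ : (𝓞 (kfield p))ˣ →* ℂ := (powMonoidHom 2).comp (unitVal _)
    let ψ : (𝓞 (kfield p))ˣ →* ℂ := (starRingEnd ℂ : ℂ →* ℂ).comp φ
    have hle : WE p ≤ ψ.eqLocus φ := by
      refine (Subgroup.closure_le _).2 fun u hu ↦ ?_
      change conj (unitVal _ u ^ 2) = unitVal _ u ^ 2
      rcases hu with hI | ⟨v, hv⟩
      · rw [unitVal_apply, hI, I_sq, map_neg, map_one]
      · rw [map_pow, unitVal_apply, hv, ← unitVal_apply, conj_unitVal_Q2p]
    intro hu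
    rw [← map_pow]
    exact hle hu
  · intro hu
    rcases sq_eq_sq_iff_eq_or_eq_neg.1 hu with h | h
    · exact mem_WE_of_conj_eq h
    · obtain ⟨ι, hι⟩ := exists_unitVal_eq_I p
      have hιWE : ι ∈ WE p := Subgroup.subset_closure (.inl hι)
      rw [← Subgroup.mul_mem_cancel_right _ hιWE]
      exact mem_WE_of_conj_eq (by rw [map_mul, map_mul, h, hι, conj_I, neg_mul_neg])

lemma sqrt_two_mul_sq (p : ℕ) : (√(2 * p) : ℂ) ^ 2 = algebraMap ℚ ℂ ((2 * p : ℤ) : ℚ) := by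
  have h : √(2 * p) ^ 2 = 2 * p := Real.sq_sqrt (by positivity)
  rw [map_intCast]
  exact_mod_cast h

lemma squarefree_two_mul (hp : Squarefree p) (hodd : Odd p) : Squarefree (2 * p : ℤ) := by
  have h : Squarefree (2 * p) := (Nat.squarefree_mul hodd.coprime_two_left).2
    ⟨Nat.prime_two.squarefree, hp⟩
  exact_mod_cast Int.squarefree_natCast.2 h

lemma conj_sq_eq_or_eq_neg (hp : Squarefree p) (hodd : Odd p) (hp1 : p ≠ 1)
    (u : (𝓞 (kfield p))ˣ) :
    conj (unitVal _ u) ^ 2 = unitVal _ u ^ 2 ∨ conj (unitVal _ u) ^ 2 = -unitVal _ u ^ 2 := by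
  have h0 := unitVal_ne_zero u
  have h0' : conj (unitVal _ u) ≠ 0 := (map_ne_zero _).2 h0
  set z : ℂ := conj (unitVal _ u) / unitVal _ u with hz
  have hzmem : z ∈ kfield p :=
    div_mem (conj_mem_adjoin_pair_I (unitVal_mem u)) (unitVal_mem u)
  have hzi : IsIntegral ℤ z := by
    rw [hz, div_eq_mul_inv, ← unitVal_inv]
    exact (isIntegral_conj (isIntegral_unitVal u)).mul (isIntegral_unitVal _)
  have hnorm : z * conj z = 1 := by
    rw [hz, map_div₀, Complex.conj_conj, div_mul_div_cancel₀ h0, div_self h0']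
  have hzsq := sq_eq_one_or_neg_one_of_mul_conj_eq_one (squarefree_two_mul hp hodd) (by lia)
    (by obtain ⟨k, rfl⟩ := hodd; lia) (sqrt_two_mul_sq p) hzmem hzi hnorm
  rwa [hz, div_pow, div_eq_iff (pow_ne_zero 2 h0), div_eq_iff (pow_ne_zero 2 h0), one_mul,
    neg_one_mul] at hzsq

lemma notMem_WE_iff (hp : Squarefree p) (hodd : Odd p) (hp1 : p ≠ 1) {u : (𝓞 (kfield p))ˣ} :
    u ∉ WE p ↔ conj (unitVal _ u) ^ 2 = -unitVal _ u ^ 2 := by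
  rw [mem_WE_iff]
  refine ⟨(conj_sq_eq_or_eq_neg hp hodd hp1 u).resolve_left, fun hneg heq ↦ ?_⟩
  exact pow_ne_zero 2 (unitVal_ne_zero u) (self_eq_neg.1 (heq.symm.trans hneg))

lemma index_WE_eq_two_iff_exists (hp : Squarefree p) (hodd : Odd p) (hp1 : p ≠ 1) :
    (WE p).index = 2 ↔ ∃ u : (𝓞 (kfield p))ˣ, conj (unitVal _ u) ^ 2 = -unitVal _ u ^ 2 := by
  simp_rw [← notMem_WE_iff hp hodd hp1]
  constructor
  · intro hindex
    by_contra! hall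
    have htop : WE p = ⊤ := (Subgroup.eq_top_iff' _).2 hall
    rw [htop, Subgroup.index_top] at hindex
    lia
  · rintro ⟨u, hu⟩
    refine Subgroup.index_eq_two_iff.2 ⟨u, fun b ↦ ?_⟩
    by_cases hb : b ∈ WE p
    · exact .inr ⟨hb, mt (Subgroup.mul_mem_cancel_left _ hb).1 hu⟩
    · refine .inl ⟨?_, hb⟩
      rw [notMem_WE_iff hp hodd hp1] at hu hb
      rw [mem_WE_iff, map_mul, map_mul, mul_pow, mul_pow, hu, hb, neg_mul_neg]

end Index

section Equivalences

open scoped ComplexConjugate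

variable {p : ℕ}

lemma not_isSquare_two_mul (hp : Squarefree p) (hodd : Odd p) : ¬ IsSquare ((2 * p : ℤ) : ℚ) :=
  not_isSquare_intCast_of_squarefree (squarefree_two_mul hp hodd) (by lia)

lemma not_isSquare_two (hp : Squarefree p) (hodd : Odd p) (hp1 : p ≠ 1) :
    ¬ IsSquare (2 : Q2p p) := by
  rintro ⟨w, hw⟩
  have hw2 : (w : ℂ) ^ 2 = algebraMap ℚ ℂ 2 := by
    rw [map_ofNat, sq]; exact (congrArg Subtype.val hw).symm
  rcases (exists_mem_adjoin_sqrt_sq_eq_iff (not_isSquare_two_mul hp hodd) (sqrt_two_mul_sq p)).1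
    ⟨w, w.2, hw2⟩ with h | ⟨r, hr⟩
  · exact not_isSquare_intCast_of_squarefree Int.prime_two.squarefree (by simp)
      (by exact_mod_cast h)
  · refine not_isSquare_intCast_of_squarefree (Int.squarefree_natCast.2 hp)
      (by exact_mod_cast hp1) ⟨r / 2, ?_⟩
    push_cast at hr ⊢
    linear_combination hr / 4

lemma Fbiq_eq_adjoin (p : ℕ) : Fbiq p = ℚ⟮(√(2 * p) : ℂ), (√2 : ℂ)⟯ := by
  have hmul : (√(2 * p) : ℂ) = √2 * √p := by
    rw [Real.sqrt_mul zero_le_two, ofReal_mul]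
  have h2 : (√2 : ℂ) ≠ 0 := by simp
  refine le_antisymm (adjoin_le_iff.2 ?_) (adjoin_le_iff.2 ?_) <;> rintro x (rfl | rfl)
  · rw [eq_div_of_mul_eq h2 ((mul_comm _ _).trans hmul.symm)]
    exact div_mem (subset_adjoin _ _ (by simp)) (subset_adjoin _ _ (by simp))
  · exact subset_adjoin _ _ (by simp)
  · rw [hmul]
    exact mul_mem (subset_adjoin _ _ (by simp)) (subset_adjoin _ _ (by simp))
  · exact subset_adjoin _ _ (by simp)

lemma mem_Fbiq_iff {x : ℂ} : x ∈ Fbiq p ↔ x ∈ (Q2p p)⟮(√2 : ℂ)⟯ := by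
  rw [Fbiq_eq_adjoin, ← adjoin_simple_adjoin_simple]
  rfl

lemma exists_mem_Fbiq_sq_eq_iff (hp : Squarefree p) (hodd : Odd p) (hp1 : p ≠ 1) {e : Q2p p}
    (he : ¬ IsSquare e) :
    (∃ x : ℂ, x ∈ Fbiq p ∧ x ^ 2 = (e : ℂ)) ↔ IsSquare (2 * e) := by
  have hsqrt : (√2 : ℂ) ^ 2 = algebraMap (Q2p p) ℂ 2 := by
    rw [map_ofNat]
    exact_mod_cast Real.sq_sqrt zero_le_two
  simp_rw [mem_Fbiq_iff]
  exact (exists_mem_adjoin_sqrt_sq_eq_iff (not_isSquare_two hp hodd hp1) hsqrt).trans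
    (or_iff_right he)

variable {ε : (𝓞 (Q2p p))ˣ}

lemma exists_unitVal_eq_mul_conj (u : (𝓞 (kfield p))ˣ) :
    ∃ v : (𝓞 (Q2p p))ˣ, unitVal _ v = unitVal _ u * conj (unitVal _ u) := by
  have integral_mul_conj (u : (𝓞 (kfield p))ˣ) :
      IsIntegral ℤ (unitVal _ u * conj (unitVal _ u)) :=
    (isIntegral_unitVal u).mul (isIntegral_conj (isIntegral_unitVal u))
  have h0 := unitVal_ne_zero u
  refine exists_unitVal_eq ?_ (mul_ne_zero h0 ((map_ne_zero _).2 h0)) (integral_mul_conj u) ?_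
  · exact mem_adjoin_of_conj_eq
      (mul_mem (unitVal_mem u) (conj_mem_adjoin_pair_I (unitVal_mem u)))
      (by rw [map_mul, Complex.conj_conj, mul_comm])
  · rw [mul_inv, ← map_inv₀ (starRingEnd ℂ), ← unitVal_inv]
    exact integral_mul_conj u⁻¹

lemma isSquare_two_mul_of_conj_sq_eq_neg (hp : Squarefree p) (hodd : Odd p)
    (hp1 : p ≠ 1) (hε : IsFundamentalUnit ε) {u : (𝓞 (kfield p))ˣ}
    (hu : conj (unitVal _ u) ^ 2 = -unitVal _ u ^ 2) :
    IsSquare (2 * ((ε : 𝓞 (Q2p p)) : Q2p p)) := by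
  set e : Q2p p := ((ε : 𝓞 (Q2p p)) : Q2p p)
  have he0 : e ≠ 0 := fun h ↦ unitVal_ne_zero ε (congrArg Subtype.val h)
  obtain ⟨v, hv⟩ := exists_unitVal_eq_mul_conj u
  obtain ⟨n, rfl⟩ : ∃ n : ℤ, v = ε ^ n :=
    hε.exists_eq_zpow_of_pos (Complex.normSq_pos.2 (unitVal_ne_zero u)) (hv.trans (mul_conj _))
  obtain ⟨β, hβ⟩ : ∃ β : Q2p p, (β : ℂ) = unitVal _ u + conj (unitVal _ u) :=
    ⟨⟨_, mem_adjoin_of_conj_eq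
      (add_mem (unitVal_mem u) (conj_mem_adjoin_pair_I (unitVal_mem u)))
      (by rw [map_add, Complex.conj_conj, add_comm])⟩, rfl⟩
  have hβsq : β ^ 2 = 2 * e ^ n := by
    have : (β : ℂ) ^ 2 = 2 * unitVal _ ε ^ n := by
      rw [← unitVal_zpow, hv, hβ]
      linear_combination hu
    exact Subtype.ext this
  obtain ⟨m, rfl | rfl⟩ := n.even_or_odd'
  · refine absurd ⟨β / e ^ m, ?_⟩ (not_isSquare_two hp hodd hp1)
    rw [← sq, div_pow, hβsq, zpow_mul', zpow_ofNat]
    exact (mul_div_cancel_right₀ _ (pow_ne_zero 2 (zpow_ne_zero m he0))).symm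
  · refine ⟨β / e ^ m, ?_⟩
    rw [← sq, div_pow, hβsq, zpow_add_one₀ he0, zpow_mul', zpow_ofNat]
    field_simp

lemma exists_conj_sq_eq_neg_of_isSquare_two_mul
    (h : IsSquare (2 * ((ε : 𝓞 (Q2p p)) : Q2p p))) :
    ∃ u : (𝓞 (kfield p))ˣ, conj (unitVal _ u) ^ 2 = -unitVal _ u ^ 2 := by
  obtain ⟨β, hβ⟩ := h
  have hβ' : 2 * unitVal _ ε = β * β := congrArg Subtype.val hβ
  set w : ℂ := (1 + I) / 2 * β
  have hwsq : w ^ 2 = I * unitVal _ ε := by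
    linear_combination (β : ℂ) ^ 2 / 4 * I_sq - I / 2 * hβ'
  have hwmem : w ∈ kfield p := by
    have hβ2 : (β : ℂ) / 2 ∈ Q2p p := div_mem β.2 (ofNat_mem _ 2)
    exact mem_adjoin_pair_I_iff.2 ⟨β / 2, hβ2, β / 2, hβ2, by ring⟩
  obtain ⟨u, hu⟩ := exists_unitVal_eq_of_pow_eq (n := 8) (v := ε ^ 4) hwmem (by simp) <| by
    rw [pow_mul w 2 4, hwsq, mul_pow, I_pow_four, one_mul, map_pow]
  refine ⟨u, ?_⟩
  rw [hu, ← map_pow, hwsq, map_mul, conj_I, conj_unitVal_Q2p, neg_mul]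

lemma index_WE_eq_two_iff (hp : Squarefree p) (hodd : Odd p) (hp1 : p ≠ 1)
    (hε : IsFundamentalUnit ε) : (WE p).index = 2 ↔ IsSquare (2 * ((ε : 𝓞 (Q2p p)) : Q2p p)) :=
  (index_WE_eq_two_iff_exists hp hodd hp1).trans
    ⟨fun ⟨_, hu⟩ ↦ isSquare_two_mul_of_conj_sq_eq_neg hp hodd hp1 hε hu,
      exists_conj_sq_eq_neg_of_isSquare_two_mul⟩

instance : NumberField (Q2p p) where
  to_finiteDimensional := adjoin.finiteDimensional (isIntegral_sqrt (sqrt_two_mul_sq p))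

lemma norm_eq_one_of_isSquare_two_mul (h : IsSquare (2 * ((ε : 𝓞 (Q2p p)) : Q2p p))) :
    Algebra.norm ℚ ((ε : 𝓞 (Q2p p)) : Q2p p) = 1 := by
  set N := Algebra.norm ℚ ((ε : 𝓞 (Q2p p)) : Q2p p) with hN
  have habs : |N| = 1 := NumberField.Units.norm _ ε
  have hnonneg : 0 ≤ 2 ^ Module.finrank ℚ (Q2p p) * N := by
    rw [hN, ← Algebra.norm_algebraMap, map_ofNat, ← map_mul]
    exact (h.map (Algebra.norm ℚ)).nonneg
  rwa [abs_of_nonneg (nonneg_of_mul_nonneg_right hnonneg (by positivity))] at habs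

lemma nonneg_of_isSquare_intCast_mul (hε : IsFundamentalUnit ε) {q : ℤ}
    (h : IsSquare (q * ((ε : 𝓞 (Q2p p)) : Q2p p))) : 0 ≤ q := by
  obtain ⟨w, hw⟩ := h
  obtain ⟨⟨r, hr, hεr⟩, -⟩ := hε
  obtain ⟨t, ht⟩ := exists_ofReal_eq_of_mem_adjoin w.2
  have hqr : (q * r : ℝ) = t * t := by
    have : (q : ℂ) * (((ε : 𝓞 (Q2p p)) : Q2p p) : ℂ) = w * w := congrArg Subtype.val hw
    rw [hεr, ← ht] at this
    exact_mod_cast this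
  have hq : (0 : ℝ) ≤ q :=
    nonneg_of_mul_nonneg_left (hqr ▸ mul_self_nonneg t) (one_pos.trans hr)
  exact_mod_cast hq

lemma isSquare_two_mul_natCast (p : ℕ) : IsSquare (2 * p : Q2p p) := by
  refine ⟨⟨_, mem_adjoin_simple_self ℚ _⟩, Subtype.ext ?_⟩
  have h := sqrt_two_mul_sq p
  rw [map_intCast] at h
  push_cast [sq] at h
  exact h.symm

lemma isSquare_two_mul_of_norm_eq_one (hp : p.Prime) (hodd : Odd p) (hε : IsFundamentalUnit ε)
    (hnorm : Algebra.norm ℚ ((ε : 𝓞 (Q2p p)) : Q2p p) = 1) :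
    IsSquare (2 * ((ε : 𝓞 (Q2p p)) : Q2p p)) := by
  set e : Q2p p := ((ε : 𝓞 (Q2p p)) : Q2p p)
  obtain ⟨q, hqdvd, hq⟩ : ∃ q : ℤ, q ∣ 2 * p ∧ IsSquare (q * e) :=
    exists_dvd_isSquare_mul_of_norm_eq_one (squarefree_two_mul hp.squarefree hodd)
      (even_two_mul _) (sqrt_two_mul_sq p) (RingOfIntegers.isIntegral_coe (ε : 𝓞 (Q2p p))) hnorm
  lift q to ℕ using nonneg_of_isSquare_intCast_mul hε hq
  obtain ⟨a, b, ha, hb, rfl⟩ := Nat.dvd_mul.1 (by exact_mod_cast hqdvd : q ∣ 2 * p)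
  have h2p := isSquare_two_mul_natCast p
  have hp0 : (p : Q2p p) ≠ 0 := Nat.cast_ne_zero.2 hp.ne_zero
  have h_not : ¬ IsSquare e := hε.not_isSquare
  rcases (Nat.dvd_prime Nat.prime_two).1 ha with ha | ha <;>
    rcases (Nat.dvd_prime hp).1 hb with hb | hb <;>
    rw [ha, hb] at hq <;> push_cast [one_mul, mul_one] at hq
  · exact absurd hq h_not
  · have h : 2 * e = p * e * (2 * p) / (p * p) := by field_simp
    exact h ▸ (hq.mul h2p).div (IsSquare.mul_self _)
  · exact hq
  · have h : e = 2 * p * e / (2 * p) := by field_simp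
    exact absurd (h ▸ hq.div h2p) h_not

lemma norm_eq_one_iff_isSquare_two_mul (hp : p.Prime) (hodd : Odd p) (hε : IsFundamentalUnit ε) :
    Algebra.norm ℚ ((ε : 𝓞 (Q2p p)) : Q2p p) = 1 ↔
      IsSquare (2 * ((ε : 𝓞 (Q2p p)) : Q2p p)) :=
  ⟨isSquare_two_mul_of_norm_eq_one hp hodd hε, norm_eq_one_of_isSquare_two_mul⟩

end Equivalences

theorem statement_6 (p : ℕ) (hp : p.Prime) (hodd : Odd p)
    (ε : (𝓞 (Q2p p))ˣ) (hε : IsFundamentalUnit ε) :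
    ((∃ x : ℂ, x ∈ Fbiq p ∧ x ^ 2 = (((ε : 𝓞 (Q2p p)) : Q2p p) : ℂ)) ↔ (WE p).index = 2) ∧
    ((WE p).index = 2 ↔ Algebra.norm ℚ ((ε : 𝓞 (Q2p p)) : Q2p p) = 1) := by
  rw [exists_mem_Fbiq_sq_eq_iff hp.squarefree hodd hp.ne_one hε.not_isSquare,
    index_WE_eq_two_iff hp.squarefree hodd hp.ne_one hε,
    norm_eq_one_iff_isSquare_two_mul hp hodd hε]
  exact ⟨Iff.rfl, Iff.rfl⟩
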